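/- Let f be analytic on 𝔻 with f(0) = 0, f'(0) = 1, and Re(f(z)/z) > 0 for all z ∈ 𝔻 \ {0}. Then z f'(z)/f(z) ∈ Ω_car for every z with 0 < |z| < 1/(2 + √5) = √5 − 2. -/

import Mathlib

open Complex Metric

def omegaCar : Set ℂ := {w : ℂ | ∃ u : ℂ, ‖u‖ < 1 ∧ w = 1 + u + u ^ 2 / 2}

def SCar (f : ℂ → ℂ) : Prop :=
  DifferentiableOn ℂ f (Metric.ball (0 : ℂ) 1) ∧ f 0 = 0 ∧ deriv f 0 = 1 ∧
    (∀ z : ℂ, ‖z‖ < 1 → z ≠ 0 → f z ≠ 0) ∧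
    (∀ z : ℂ, ‖z‖ < 1 → z ≠ 0 → z * deriv f z / f z ∈ omegaCar)

/-!
Write `f z = z * p z`, where `p` maps the unit disk to the right half-plane. Then
`z * f' z / f z = 1 + z * p' z / p z`, and the Schwarz–Pick inequality for the half-plane bounds the
last term by `2 * r / (1 - r ^ 2)` with `r = ‖z‖`. This is less than `1 / 2` exactly when
`r ^ 2 + 4 * r < 1`, that is, when `r < √5 - 2`. Finally, the disk of radius `1 / 2` about `1` lies
in `omegaCar`, as one sees by solving `1 + u + u ^ 2 / 2 = w` with a square root of `2 * w - 1`.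
-/

open Set Topology
open scoped ComplexConjugate

lemma ball_one_half_subset_omegaCar : ball 1 (1 / 2) ⊆ omegaCar := by
  intro w hw
  set s : ℂ := (2 * w - 1) ^ (2⁻¹ : ℂ)
  have hs : s ^ 2 = 2 * w - 1 := cpow_ofNat_inv_pow (2 * w - 1) 2
  have hs_re : 0 ≤ s.re := by
    rw [cpow_inv_two_re]
    positivity
  refine ⟨s - 1, ?_, by linear_combination -hs / 2⟩
  have one_le : 1 ≤ ‖s + 1‖ :=
    calc (1 : ℝ) ≤ (s + 1).re := by simpa using hs_re
      _ ≤ ‖s + 1‖ := re_le_norm _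
  calc ‖s - 1‖ ≤ ‖s - 1‖ * ‖s + 1‖ := le_mul_of_one_le_right (norm_nonneg _) one_le
    _ = ‖2 * (w - 1)‖ := by
      rw [← norm_mul]
      congr 1
      linear_combination hs
    _ < 1 := by
      rw [mem_ball, dist_eq] at hw
      rw [norm_mul, norm_ofNat]
      linarith

lemma one_sub_norm_sq_pos {z : ℂ} (hz : z ∈ ball 0 1) : 0 < 1 - ‖z‖ ^ 2 := by
  rw [mem_ball_zero_iff] at hz
  exact sub_pos.mpr (pow_lt_one₀ (norm_nonneg z) hz two_ne_zero)

/-- The disk automorphism `w ↦ (w + z) / (1 + conj z * w)` carrying `0` to `z`; precomposing with it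
moves the base point of the Schwarz lemma from `0` to `z`. -/
noncomputable def diskShift (z w : ℂ) : ℂ := (w + z) / (1 + conj z * w)

section diskShift

variable {z w : ℂ}

lemma diskShift_zero : diskShift z 0 = z := by simp [diskShift]

lemma norm_sq_one_add_conj_mul_sub_norm_sq_add (z w : ℂ) :
    ‖1 + conj z * w‖ ^ 2 - ‖w + z‖ ^ 2 = (1 - ‖z‖ ^ 2) * (1 - ‖w‖ ^ 2) := by
  simp only [Complex.sq_norm, normSq_apply, add_re, add_im, mul_re, mul_im, conj_re, conj_im,
    one_re, one_im]
  ring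

lemma norm_add_lt_norm_one_add_conj_mul (hz : z ∈ ball 0 1) (hw : w ∈ ball 0 1) :
    ‖w + z‖ < ‖1 + conj z * w‖ := by
  refine lt_of_pow_lt_pow_left₀ 2 (norm_nonneg _) (sub_pos.mp ?_)
  rw [norm_sq_one_add_conj_mul_sub_norm_sq_add]
  exact mul_pos (one_sub_norm_sq_pos hz) (one_sub_norm_sq_pos hw)

lemma one_add_conj_mul_ne_zero (hz : z ∈ ball 0 1) (hw : w ∈ ball 0 1) : 1 + conj z * w ≠ 0 :=
  norm_pos_iff.mp ((norm_nonneg _).trans_lt (norm_add_lt_norm_one_add_conj_mul hz hw))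

lemma mapsTo_diskShift_ball (hz : z ∈ ball 0 1) : MapsTo (diskShift z) (ball 0 1) (ball 0 1) := by
  intro w hw
  rw [mem_ball_zero_iff, diskShift, norm_div,
    div_lt_one (norm_pos_iff.mpr (one_add_conj_mul_ne_zero hz hw))]
  exact norm_add_lt_norm_one_add_conj_mul hz hw

lemma differentiableOn_diskShift (hz : z ∈ ball 0 1) :
    DifferentiableOn ℂ (diskShift z) (ball 0 1) :=
  DifferentiableOn.fun_div (by fun_prop) (by fun_prop) fun _ hw ↦ one_add_conj_mul_ne_zero hz hw

lemma hasDerivAt_diskShift_zero (z : ℂ) : HasDerivAt (diskShift z) (1 - ‖z‖ ^ 2) 0 := by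
  have numerator : HasDerivAt (fun w ↦ w + z) 1 0 := (hasDerivAt_id 0).add_const z
  have denominator : HasDerivAt (fun w ↦ 1 + conj z * w) (conj z) 0 := by
    simpa using ((hasDerivAt_id (0 : ℂ)).const_mul (conj z)).const_add 1
  refine (numerator.fun_div denominator (by simp)).congr_deriv ?_
  simp [← mul_conj']

end diskShift

lemma norm_deriv_le_div_one_sub_norm_sq_of_mapsTo_closedBall {E : Type*} [NormedAddCommGroup E]
    [NormedSpace ℂ E] {g : ℂ → E} {z : ℂ} {M : ℝ} (hg : DifferentiableOn ℂ g (ball 0 1))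
    (hz : z ∈ ball 0 1) (hmaps : MapsTo g (ball 0 1) (closedBall (g z) M)) :
    ‖deriv g z‖ ≤ M / (1 - ‖z‖ ^ 2) := by
  have hshift := mapsTo_diskShift_ball hz
  have hg_shift : HasDerivAt (g ∘ diskShift z) ((1 - ‖z‖ ^ 2 : ℂ) • deriv g z) 0 :=
    (hg.differentiableAt (isOpen_ball.mem_nhds hz)).hasDerivAt.scomp_of_eq 0
      (hasDerivAt_diskShift_zero z) diskShift_zero.symm
  have schwarz : ‖deriv (g ∘ diskShift z) 0‖ ≤ M / 1 := by
    refine norm_deriv_le_div_of_mapsTo_ball (hg.comp (differentiableOn_diskShift hz) hshift)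
      ?_ one_pos
    rw [Function.comp_apply, diskShift_zero]
    exact hmaps.comp hshift
  have hpos := one_sub_norm_sq_pos hz
  have hfactor : ‖(1 - ‖z‖ ^ 2 : ℂ)‖ = 1 - ‖z‖ ^ 2 := by
    exact_mod_cast Real.norm_of_nonneg hpos.le
  rwa [hg_shift.deriv, norm_smul, div_one, hfactor, ← le_div_iff₀' hpos] at schwarz

section HalfPlane

variable {a w : ℂ}

lemma add_conj_ne_zero (ha : 0 < a.re) (hw : 0 ≤ w.re) : w + conj a ≠ 0 := by
  intro h
  have : w.re + a.re = 0 := by simpa using congrArg re h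
  linarith

lemma norm_sub_le_norm_add_conj (ha : 0 ≤ a.re) (hw : 0 ≤ w.re) : ‖w - a‖ ≤ ‖w + conj a‖ := by
  have identity : ‖w + conj a‖ ^ 2 - ‖w - a‖ ^ 2 = 4 * (a.re * w.re) := by
    simp only [Complex.sq_norm, normSq_apply, add_re, add_im, sub_re, sub_im, conj_re, conj_im]
    ring
  refine le_of_pow_le_pow_left₀ two_ne_zero (norm_nonneg _) (sub_nonneg.mp ?_)
  rw [identity]
  positivity

end HalfPlane

section Caratheodory

variable {p : ℂ → ℂ} {z : ℂ}

lemma norm_deriv_le_of_mapsTo_re_nonneg (hp : DifferentiableOn ℂ p (ball 0 1))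
    (hmaps : MapsTo p (ball 0 1) {w | 0 ≤ w.re}) (hz : z ∈ ball 0 1) (hpz : 0 < (p z).re) :
    ‖deriv p z‖ ≤ 2 * (p z).re / (1 - ‖z‖ ^ 2) := by
  -- The Cayley transform of the half-plane onto the disk that sends `p z` to `0`.
  set q : ℂ → ℂ := fun w ↦ (p w - p z) / (p w + conj (p z))
  have hden : ∀ w ∈ ball 0 1, p w + conj (p z) ≠ 0 := fun w hw ↦ add_conj_ne_zero hpz (hmaps hw)
  have hq : DifferentiableOn ℂ q (ball 0 1) := (hp.sub_const _).fun_div (hp.add_const _) hden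
  have hq_maps : MapsTo q (ball 0 1) (closedBall (q z) 1) := by
    intro w hw
    have hqz : q z = 0 := by simp [q]
    rw [hqz, mem_closedBall_zero_iff, norm_div]
    exact div_le_one_of_le₀ (norm_sub_le_norm_add_conj hpz.le (hmaps hw)) (norm_nonneg _)
  have hq_deriv : deriv q z = deriv p z / (2 * (p z).re : ℝ) := by
    have hpd := (hp.differentiableAt (isOpen_ball.mem_nhds hz)).hasDerivAt
    rw [((hpd.sub_const _).fun_div (hpd.add_const _) (hden z hz)).deriv, ← add_conj]
    have := hden z hz
    field_simp
    ring
  have schwarz := norm_deriv_le_div_one_sub_norm_sq_of_mapsTo_closedBall hq hz hq_maps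
  rwa [hq_deriv, norm_div, norm_real, Real.norm_of_nonneg (by positivity),
    div_le_iff₀' (by positivity), mul_one_div] at schwarz

lemma norm_mul_deriv_div_le_of_mapsTo_re_nonneg (hp : DifferentiableOn ℂ p (ball 0 1))
    (hmaps : MapsTo p (ball 0 1) {w | 0 ≤ w.re}) (hz : z ∈ ball 0 1) (hpz : 0 < (p z).re) :
    ‖z * deriv p z / p z‖ ≤ 2 * ‖z‖ / (1 - ‖z‖ ^ 2) := by
  have hpos := one_sub_norm_sq_pos hz
  have hnorm : 0 < ‖p z‖ := hpz.trans_le (re_le_norm _)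
  rw [norm_div, norm_mul, div_le_iff₀ hnorm]
  calc ‖z‖ * ‖deriv p z‖ ≤ ‖z‖ * (2 * (p z).re / (1 - ‖z‖ ^ 2)) := by
        gcongr
        exact norm_deriv_le_of_mapsTo_re_nonneg hp hmaps hz hpz
    _ ≤ ‖z‖ * (2 * ‖p z‖ / (1 - ‖z‖ ^ 2)) := by
        gcongr
        exact re_le_norm _
    _ = 2 * ‖z‖ / (1 - ‖z‖ ^ 2) * ‖p z‖ := by ring

end Caratheodory

section Quotient

variable {f : ℂ → ℂ} {z : ℂ}

lemma dslope_zero_of_ne (hf0 : f 0 = 0) (hz : z ≠ 0) : dslope f 0 z = f z / z := by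
  rw [dslope_of_ne f hz, slope_def_field, hf0, sub_zero, sub_zero]

lemma mapsTo_dslope_zero_re_nonneg {r : ℝ} (hf : DifferentiableAt ℂ f 0) (hf0 : f 0 = 0)
    (hr : 0 < r) (hre : ∀ z ∈ ball 0 r, z ≠ 0 → 0 ≤ (f z / z).re) :
    MapsTo (dslope f 0) (ball 0 r) {w | 0 ≤ w.re} := by
  intro z hz
  rcases eq_or_ne z 0 with rfl | hz0
  · have limit : Filter.Tendsto (fun w ↦ (dslope f 0 w).re) (𝓝[≠] 0) (𝓝 (dslope f 0 0).re) :=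
      ((continuous_re.continuousAt.comp (continuousAt_dslope_same.mpr hf)).tendsto).mono_left
        nhdsWithin_le_nhds
    refine ge_of_tendsto limit ?_
    filter_upwards [self_mem_nhdsWithin, mem_nhdsWithin_of_mem_nhds (ball_mem_nhds 0 hr)]
      with w hw0 hw
    rw [dslope_zero_of_ne hf0 hw0]
    exact hre w hw hw0
  · rw [mem_ofPred_eq, dslope_zero_of_ne hf0 hz0]
    exact hre z hz hz0

lemma mul_deriv_div_eq_one_add_dslope_zero (hf : DifferentiableAt ℂ f z) (hf0 : f 0 = 0)
    (hz : z ≠ 0) (hfz : f z ≠ 0) :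
    z * deriv f z / f z = 1 + z * deriv (dslope f 0) z / dslope f 0 z := by
  have hquot : dslope f 0 =ᶠ[𝓝 z] fun w ↦ f w / w := by
    filter_upwards [isOpen_ne.mem_nhds hz] with w hw using dslope_zero_of_ne hf0 hw
  rw [hquot.deriv_eq, hquot.eq_of_nhds, (hf.hasDerivAt.fun_div (hasDerivAt_id' z) hz).deriv]
  field_simp
  ring

end Quotient

lemma lt_one_of_lt_one_div_two_add_sqrt_five {r : ℝ} (hr : r < 1 / (2 + √5)) : r < 1 :=
  hr.trans ((div_lt_one (by positivity)).mpr (by linarith [Real.sqrt_nonneg 5]))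

lemma two_mul_div_one_sub_sq_lt_half {r : ℝ} (hr0 : 0 ≤ r) (hr : r < 1 / (2 + √5)) :
    2 * r / (1 - r ^ 2) < 1 / 2 := by
  have h5 : √5 ^ 2 = 5 := Real.sq_sqrt (by norm_num)
  have hradius : 1 / (2 + √5) = √5 - 2 := by
    rw [div_eq_iff (by positivity)]
    linear_combination -h5
  have hsq : (r + 2) ^ 2 < √5 ^ 2 := by
    gcongr
    linarith
  rw [div_lt_iff₀ (by linarith)]
  linarith

theorem stmt_19_general (f : ℂ → ℂ) (hfd : DifferentiableOn ℂ f (ball 0 1)) (hf0 : f 0 = 0)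
    (hre : ∀ z : ℂ, ‖z‖ < 1 → z ≠ 0 → 0 < (f z / z).re) (z : ℂ) (hz0 : z ≠ 0)
    (hz : ‖z‖ < 1 / (2 + √5)) : z * deriv f z / f z ∈ omegaCar := by
  have hz1 : ‖z‖ < 1 := lt_one_of_lt_one_div_two_add_sqrt_five hz
  have hz_ball : z ∈ ball (0 : ℂ) 1 := mem_ball_zero_iff.mpr hz1
  have h0_nhds : ball (0 : ℂ) 1 ∈ 𝓝 0 := ball_mem_nhds 0 one_pos
  have hfz : f z ≠ 0 := fun h ↦ by simpa [h] using hre z hz1 hz0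
  have hp : DifferentiableOn ℂ (dslope f 0) (ball 0 1) := (differentiableOn_dslope h0_nhds).mpr hfd
  have hp_maps : MapsTo (dslope f 0) (ball 0 1) {w | 0 ≤ w.re} :=
    mapsTo_dslope_zero_re_nonneg (hfd.differentiableAt h0_nhds) hf0 one_pos
      fun w hw hw0 ↦ (hre w (mem_ball_zero_iff.mp hw) hw0).le
  have hpz : 0 < (dslope f 0 z).re := by simpa only [dslope_zero_of_ne hf0 hz0] using hre z hz1 hz0
  apply ball_one_half_subset_omegaCar
  rw [mul_deriv_div_eq_one_add_dslope_zero (hfd.differentiableAt (isOpen_ball.mem_nhds hz_ball))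
    hf0 hz0 hfz, mem_ball, dist_eq, add_sub_cancel_left]
  exact (norm_mul_deriv_div_le_of_mapsTo_re_nonneg hp hp_maps hz_ball hpz).trans_lt
    (two_mul_div_one_sub_sq_lt_half (norm_nonneg z) hz)

theorem stmt_19 (f : ℂ → ℂ)
    (hfd : DifferentiableOn ℂ f (Metric.ball (0 : ℂ) 1))
    (hf0 : f 0 = 0) (hf1 : deriv f 0 = 1)
    (hre : ∀ z : ℂ, ‖z‖ < 1 → z ≠ 0 → 0 < (f z / z).re) :
    ∀ z : ℂ, z ≠ 0 → ‖z‖ < 1 / (2 + Real.sqrt 5) →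
      z * deriv f z / f z ∈ omegaCar :=
  stmt_19_general f hfd hf0 hre
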